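/- Let ι be an SL instance that admits at least one feasible SL schedule, let OPT* denote the minimum makespan over all feasible SL schedules of ι, and let L_min denote the minimum over all feasible assignments Y of max_{i ∈ I} ∑_{j : Y j = i} (p i j + p' i j). Then for every feasible assignment Y₀ with max_{i ∈ I} ∑_{j : Y₀ j = i} (p i j + p' i j) ≤ 2 · L_min, there exists a feasible SL schedule for ι with assignment Y₀ whose makespan is at most 5 · OPT*. -/

import Mathlib

/-- Feasibility of an SL schedule `(Y, s, s')` for an SL instance: `Y` respects the
adjacency relation `E` and the memory capacities `M` (w.r.t. demands `d`), the T2 of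
client `j` starts no earlier than its release time `r j`, its T4 starts no earlier
than `ℓ j` slots after its T2 completes, and for distinct clients assigned to the
same helper the T2/T4 processing intervals are pairwise disjoint. -/
def SLFeasible {J I : Type*} [Fintype J] [DecidableEq I]
    (E : J → I → Prop) (M : I → ℕ) (d : J → ℕ) (r ℓ : J → ℕ) (p p' : I → J → ℕ)
    (Y : J → I) (s s' : J → ℕ) : Prop :=
  (∀ j : J, E j (Y j)) ∧
  (∀ i : I, ∑ j ∈ Finset.univ.filter (fun j => Y j = i), d j ≤ M i) ∧
  (∀ j : J, r j ≤ s j) ∧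
  (∀ j : J, s j + p (Y j) j + ℓ j ≤ s' j) ∧
  (∀ j j' : J, j ≠ j' → Y j = Y j' →
    Disjoint (Set.Ico (s j) (s j + p (Y j) j))
      (Set.Ico (s j') (s j' + p (Y j') j')) ∧
    Disjoint (Set.Ico (s j) (s j + p (Y j) j))
      (Set.Ico (s' j') (s' j' + p' (Y j') j')) ∧
    Disjoint (Set.Ico (s' j) (s' j + p' (Y j) j))
      (Set.Ico (s j') (s j' + p (Y j') j')) ∧
    Disjoint (Set.Ico (s' j) (s' j + p' (Y j) j))
      (Set.Ico (s' j') (s' j' + p' (Y j') j')))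

/-- The makespan of an SL schedule: the maximum over clients `j` of the completion
time `c j = s' j + p' (Y j) j + r' j`. -/
def SLMakespan {J I : Type*} [Fintype J]
    (r' : J → ℕ) (p' : I → J → ℕ) (Y : J → I) (s' : J → ℕ) : ℕ :=
  Finset.univ.sup (fun j => s' j + p' (Y j) j + r' j)

/-!
Upper bound: let every helper wait for the last release time, process the T2 tasks of its clients
back to back, wait for the longest delay `ℓ`, and then process their T4 tasks back to back. The
makespan is at most `max r + max load + max ℓ + max r'`.

Lower bound: in any feasible schedule a single client already witnesses that each of `max r`,
`max ℓ` and `max r'` is at most the makespan, and a helper occupies disjoint time slots before the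
makespan, one for each unit of its load. So the four summands above are at most `OPT`, `α * OPT`,
`OPT` and `OPT` when the maximum load is within a factor `α` of the least possible one.
-/

theorem disjoint_Ico_of_le {T : Type*} [Preorder T] {a b c d : T} (h : b ≤ c) :
    Disjoint (Set.Ico a b) (Set.Ico c d) :=
  (Set.Iio_disjoint_Ici h).mono Set.Ico_subset_Iio_self Set.Ico_subset_Ici_self

section HelperLoad

variable {J I T : Type*} [Fintype J] [DecidableEq I] [AddCommMonoid T]

/-- The load of helper `i` under the assignment `Y`: the total duration of the tasks it is given,
where client `j` needs time `w i j` on helper `i`. -/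
def helperLoad (w : I → J → T) (Y : J → I) (i : I) : T :=
  ∑ j with Y j = i, w i j

theorem helperLoad_add (w w' : I → J → T) (Y : J → I) (i : I) :
    helperLoad (w + w') Y i = helperLoad w Y i + helperLoad w' Y i :=
  Finset.sum_add_distrib

variable [LinearOrder J]

/-- The time client `j` waits if its helper processes its clients back to back, in the order
of `J`. -/
def queueDelay (w : I → J → T) (Y : J → I) (j : J) : T :=
  ∑ k with Y k = Y j ∧ k < j, w (Y j) k

theorem queueDelay_add_self (w : I → J → T) (Y : J → I) (j : J) :
    queueDelay w Y j + w (Y j) j = ∑ k with Y k = Y j ∧ k ≤ j, w (Y j) k := by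
  have filter_le_eq_insert :
      Finset.univ.filter (fun k => Y k = Y j ∧ k ≤ j) =
        insert j (Finset.univ.filter fun k => Y k = Y j ∧ k < j) := by
    grind
  rw [filter_le_eq_insert, Finset.sum_insert (by simp), add_comm, queueDelay]

variable [PartialOrder T] [CanonicallyOrderedAdd T]

theorem queueDelay_add_self_le_helperLoad (w : I → J → T) (Y : J → I) (j : J) :
    queueDelay w Y j + w (Y j) j ≤ helperLoad w Y (Y j) := by
  rw [queueDelay_add_self]
  exact Finset.sum_le_sum_of_subset (Finset.monotone_filter_right _ fun _ _ => And.left)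

theorem queueDelay_add_self_le_of_lt (w : I → J → T) {Y : J → I} {j k : J} (hY : Y j = Y k)
    (hjk : j < k) : queueDelay w Y j + w (Y j) j ≤ queueDelay w Y k := by
  rw [queueDelay_add_self, queueDelay, hY]
  exact Finset.sum_le_sum_of_subset
    (Finset.monotone_filter_right _ fun _ _ h => ⟨h.1, h.2.trans_lt hjk⟩)

theorem disjoint_Ico_queueDelay [IsOrderedAddMonoid T] (w : I → J → T) {Y : J → I} {j k : J}
    (hY : Y j = Y k) (hjk : j ≠ k) (t : T) :
    Disjoint (Set.Ico (t + queueDelay w Y j) (t + queueDelay w Y j + w (Y j) j))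
      (Set.Ico (t + queueDelay w Y k) (t + queueDelay w Y k + w (Y k) k)) := by
  wlog hlt : j < k generalizing j k
  · exact (this hY.symm hjk.symm (hjk.lt_or_gt.resolve_left hlt)).symm
  refine disjoint_Ico_of_le ?_
  rw [add_assoc]
  gcongr
  exact queueDelay_add_self_le_of_lt w hY hlt

end HelperLoad

section Makespan

variable {J I : Type*} [Fintype J] (r' : J → ℕ) (p' : I → J → ℕ) (Y : J → I) (s' : J → ℕ)

theorem completion_le_slMakespan (j : J) : s' j + p' (Y j) j + r' j ≤ SLMakespan r' p' Y s' :=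
  Finset.le_sup (f := fun j => s' j + p' (Y j) j + r' j) (Finset.mem_univ j)

theorem sup_tail_le_slMakespan : Finset.univ.sup r' ≤ SLMakespan r' p' Y s' :=
  Finset.sup_mono_fun fun _ _ => Nat.le_add_left _ _

end Makespan

section Schedule

variable {J I : Type*} [Fintype J] [DecidableEq I] {E : J → I → Prop} {M : I → ℕ}
  {d r ℓ r' : J → ℕ} {p p' : I → J → ℕ} {Y : J → I} {s s' : J → ℕ}

/-- A feasible assignment of clients to helpers: it respects adjacency and capacities. -/
def SLFeasibleAssignment (E : J → I → Prop) (M : I → ℕ) (d : J → ℕ) (Y : J → I) : Prop :=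
  (∀ j, E j (Y j)) ∧ ∀ i, ∑ j with Y j = i, d j ≤ M i

/-- The minimum makespan over all feasible schedules. As an infimum in `ℕ` it is `0` if there is
no feasible schedule. -/
noncomputable def optMakespan (E : J → I → Prop) (M : I → ℕ) (d r ℓ r' : J → ℕ)
    (p p' : I → J → ℕ) : ℕ :=
  sInf {m | ∃ (Y : J → I) (s s' : J → ℕ),
    SLFeasible E M d r ℓ p p' Y s s' ∧ SLMakespan r' p' Y s' = m}

theorem le_optMakespan {n : ℕ} (hfeas : ∃ Y s s', SLFeasible E M d r ℓ p p' Y s s')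
    (h : ∀ {Y s s'}, SLFeasible E M d r ℓ p p' Y s s' → n ≤ SLMakespan r' p' Y s') :
    n ≤ optMakespan E M d r ℓ r' p p' := by
  obtain ⟨Y, s, s', hs⟩ := hfeas
  refine le_csInf ⟨_, Y, s, s', hs, rfl⟩ ?_
  rintro _ ⟨Z, t, t', ht, rfl⟩
  exact h ht

/-- The start times of the T2 tasks in the block schedule: each helper waits for the last release
time and then processes the T2 tasks of its clients back to back. -/
def blockT2Start [LinearOrder J] (r : J → ℕ) (p : I → J → ℕ) (Y : J → I) (j : J) : ℕ :=
  Finset.univ.sup r + queueDelay p Y j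

/-- The start times of the T4 tasks in the block schedule: each helper waits for the longest delay
`ℓ` after its last T2 task and then processes the T4 tasks of its clients back to back. -/
def blockT4Start [LinearOrder J] (r ℓ : J → ℕ) (p p' : I → J → ℕ) (Y : J → I) (j : J) : ℕ :=
  Finset.univ.sup r + helperLoad p Y (Y j) + Finset.univ.sup ℓ + queueDelay p' Y j

theorem blockT2Start_add_le_blockT4Start [LinearOrder J] (r ℓ : J → ℕ) (p p' : I → J → ℕ)
    {j k : J} (hY : Y j = Y k) :
    blockT2Start r p Y j + p (Y j) j + Finset.univ.sup ℓ ≤ blockT4Start r ℓ p p' Y k := by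
  have := queueDelay_add_self_le_helperLoad p Y j
  rw [blockT2Start, blockT4Start, ← hY]
  lia

theorem SLFeasibleAssignment.slFeasible_block [LinearOrder J] (hY : SLFeasibleAssignment E M d Y)
    (r ℓ : J → ℕ) (p p' : I → J → ℕ) :
    SLFeasible E M d r ℓ p p' Y (blockT2Start r p Y) (blockT4Start r ℓ p p' Y) := by
  have T2_end_le_T4_start {j k : J} (hjk : Y j = Y k) :
      blockT2Start r p Y j + p (Y j) j ≤ blockT4Start r ℓ p p' Y k :=
    le_self_add.trans (blockT2Start_add_le_blockT4Start r ℓ p p' hjk)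
  refine ⟨hY.1, hY.2, fun j => ?_, fun j => ?_, fun j k hne hjk => ⟨?_, ?_, ?_, ?_⟩⟩
  · exact le_add_right (Finset.le_sup (Finset.mem_univ j))
  · grw [Finset.le_sup (f := ℓ) (Finset.mem_univ j)]
    exact blockT2Start_add_le_blockT4Start r ℓ p p' rfl
  · exact disjoint_Ico_queueDelay p hjk hne _
  · exact disjoint_Ico_of_le (T2_end_le_T4_start hjk)
  · exact (disjoint_Ico_of_le (T2_end_le_T4_start hjk.symm)).symm
  · simpa only [blockT4Start, hjk] using disjoint_Ico_queueDelay p' hjk hne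
      (Finset.univ.sup r + helperLoad p Y (Y k) + Finset.univ.sup ℓ)

/-- The time slots in which a task of client `j` occupies its helper. -/
def busySlots (p p' : I → J → ℕ) (Y : J → I) (s s' : J → ℕ) (j : J) : Finset ℕ :=
  Finset.Ico (s j) (s j + p (Y j) j) ∪ Finset.Ico (s' j) (s' j + p' (Y j) j)

namespace SLFeasible

theorem feasibleAssignment (h : SLFeasible E M d r ℓ p p' Y s s') : SLFeasibleAssignment E M d Y :=
  ⟨h.1, h.2.1⟩

theorem release_le (h : SLFeasible E M d r ℓ p p' Y s s') (j : J) : r j ≤ s j :=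
  h.2.2.1 j

theorem add_delay_le (h : SLFeasible E M d r ℓ p p' Y s s') (j : J) :
    s j + p (Y j) j + ℓ j ≤ s' j :=
  h.2.2.2.1 j

theorem sup_release_le_slMakespan (h : SLFeasible E M d r ℓ p p' Y s s') :
    Finset.univ.sup r ≤ SLMakespan r' p' Y s' := by
  refine Finset.sup_le fun j _ => ?_
  linarith [h.release_le j, h.add_delay_le j, completion_le_slMakespan r' p' Y s' j]

theorem sup_delay_le_slMakespan (h : SLFeasible E M d r ℓ p p' Y s s') :
    Finset.univ.sup ℓ ≤ SLMakespan r' p' Y s' := by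
  refine Finset.sup_le fun j _ => ?_
  linarith [h.add_delay_le j, completion_le_slMakespan r' p' Y s' j]

theorem card_busySlots (h : SLFeasible E M d r ℓ p p' Y s s') (j : J) :
    (busySlots p p' Y s s' j).card = p (Y j) j + p' (Y j) j := by
  have T2_before_T4 : s j + p (Y j) j ≤ s' j := le_self_add.trans (h.add_delay_le j)
  rw [busySlots, Finset.card_union_of_disjoint, Nat.card_Ico, Nat.card_Ico,
    Nat.add_sub_cancel_left, Nat.add_sub_cancel_left]
  rw [← Finset.disjoint_coe, Finset.coe_Ico, Finset.coe_Ico]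
  exact disjoint_Ico_of_le T2_before_T4

theorem disjoint_busySlots (h : SLFeasible E M d r ℓ p p' Y s s') {j k : J} (hjk : j ≠ k)
    (hY : Y j = Y k) : Disjoint (busySlots p p' Y s s' j) (busySlots p p' Y s s' k) := by
  obtain ⟨T2_T2, T2_T4, T4_T2, T4_T4⟩ := h.2.2.2.2 j k hjk hY
  simp only [busySlots, ← Finset.disjoint_coe, Finset.coe_union, Finset.coe_Ico]
  exact (T2_T2.union_right T2_T4).union_left (T4_T2.union_right T4_T4)

theorem busySlots_subset_range (h : SLFeasible E M d r ℓ p p' Y s s') (j : J) :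
    busySlots p p' Y s s' j ⊆ Finset.range (SLMakespan r' p' Y s') := by
  have := h.add_delay_le j
  have := completion_le_slMakespan r' p' Y s' j
  intro x hx
  simp only [busySlots, Finset.mem_union, Finset.mem_Ico] at hx
  rw [Finset.mem_range]
  lia

theorem helperLoad_le_slMakespan (h : SLFeasible E M d r ℓ p p' Y s s') (i : I) :
    helperLoad (p + p') Y i ≤ SLMakespan r' p' Y s' := by
  have pairwiseDisjoint :
      (Finset.univ.filter fun j => Y j = i : Set J).PairwiseDisjoint (busySlots p p' Y s s') := by
    intro j hj k hk hjk
    rw [Finset.mem_coe, Finset.mem_filter_univ] at hj hk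
    exact h.disjoint_busySlots hjk (hj.trans hk.symm)
  calc
    helperLoad (p + p') Y i = ∑ j with Y j = i, (busySlots p p' Y s s' j).card :=
      Finset.sum_congr rfl fun j hj => by
        rw [h.card_busySlots, (Finset.mem_filter_univ j).1 hj, Pi.add_apply, Pi.add_apply]
    _ = ((Finset.univ.filter fun j => Y j = i).biUnion (busySlots p p' Y s s')).card :=
      (Finset.card_biUnion pairwiseDisjoint).symm
    _ ≤ (Finset.range (SLMakespan r' p' Y s')).card :=
      Finset.card_le_card (Finset.biUnion_subset.2 fun j _ => h.busySlots_subset_range j)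
    _ = SLMakespan r' p' Y s' := Finset.card_range _

end SLFeasible

variable [Fintype I]

/-- The maximum over the helpers of the total time they spend on T2 and T4 tasks. -/
def maxLoad (p p' : I → J → ℕ) (Y : J → I) : ℕ :=
  Finset.univ.sup (helperLoad (p + p') Y)

/-- The least maximum load of a feasible assignment. As an infimum in `ℕ` it is `0` if there is no
feasible assignment. -/
noncomputable def minMaxLoad (E : J → I → Prop) (M : I → ℕ) (d : J → ℕ) (p p' : I → J → ℕ) : ℕ :=
  sInf {m | ∃ Y, SLFeasibleAssignment E M d Y ∧ maxLoad p p' Y = m}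

theorem SLFeasible.minMaxLoad_le_slMakespan (h : SLFeasible E M d r ℓ p p' Y s s') :
    minMaxLoad E M d p p' ≤ SLMakespan r' p' Y s' :=
  calc
    minMaxLoad E M d p p' ≤ maxLoad p p' Y := Nat.sInf_le ⟨Y, h.feasibleAssignment, rfl⟩
    _ ≤ SLMakespan r' p' Y s' := Finset.sup_le fun i _ => h.helperLoad_le_slMakespan i

theorem slMakespan_blockT4Start_le [LinearOrder J] (r ℓ r' : J → ℕ) (p p' : I → J → ℕ)
    (Y : J → I) :
    SLMakespan r' p' Y (blockT4Start r ℓ p p' Y) ≤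
      maxLoad p p' Y + (Finset.univ.sup r + Finset.univ.sup ℓ + Finset.univ.sup r') := by
  refine Finset.sup_le fun j _ => ?_
  have load_le_max : helperLoad p Y (Y j) + helperLoad p' Y (Y j) ≤ maxLoad p p' Y :=
    helperLoad_add p p' Y (Y j) ▸ Finset.le_sup (Finset.mem_univ (Y j))
  have queue_le_load := queueDelay_add_self_le_helperLoad p' Y j
  have : r' j ≤ Finset.univ.sup r' := Finset.le_sup (Finset.mem_univ j)
  unfold blockT4Start
  lia

theorem SLFeasibleAssignment.exists_slMakespan_le (hY : SLFeasibleAssignment E M d Y)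
    (r ℓ r' : J → ℕ) (p p' : I → J → ℕ) :
    ∃ s s', SLFeasible E M d r ℓ p p' Y s s' ∧ SLMakespan r' p' Y s' ≤
      maxLoad p p' Y + (Finset.univ.sup r + Finset.univ.sup ℓ + Finset.univ.sup r') :=
  letI : LinearOrder J := LinearOrder.lift' _ (Fintype.equivFin J).injective
  ⟨_, _, hY.slFeasible_block r ℓ p p', slMakespan_blockT4Start_le r ℓ r' p p' Y⟩

end Schedule

theorem sl_five_approximation_general {J I K : Type*} [Fintype J] [Fintype I] [DecidableEq I]
    [Semiring K] [PartialOrder K] [IsOrderedRing K]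
    (E : J → I → Prop) (M : I → ℕ) (d r ℓ r' : J → ℕ) (p p' : I → J → ℕ)
    {α : K} (hα : 0 ≤ α) {Y₀ : J → I} (hY₀ : SLFeasibleAssignment E M d Y₀)
    (hload : (maxLoad p p' Y₀ : K) ≤ α * minMaxLoad E M d p p') :
    ∃ s s' : J → ℕ, SLFeasible E M d r ℓ p p' Y₀ s s' ∧
      (SLMakespan r' p' Y₀ s' : K) ≤ (α + 3) * optMakespan E M d r ℓ r' p p' := by
  obtain ⟨s, s', hs, hmakespan⟩ := hY₀.exists_slMakespan_le r ℓ r' p p'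
  refine ⟨s, s', hs, ?_⟩
  set OPT := optMakespan E M d r ℓ r' p p'
  have hfeas : ∃ Y s s', SLFeasible E M d r ℓ p p' Y s s' := ⟨Y₀, s, s', hs⟩
  have load_le : minMaxLoad E M d p p' ≤ OPT :=
    le_optMakespan hfeas SLFeasible.minMaxLoad_le_slMakespan
  have release_le : Finset.univ.sup r ≤ OPT :=
    le_optMakespan hfeas SLFeasible.sup_release_le_slMakespan
  have delay_le : Finset.univ.sup ℓ ≤ OPT :=
    le_optMakespan hfeas SLFeasible.sup_delay_le_slMakespan
  have tail_le : Finset.univ.sup r' ≤ OPT :=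
    le_optMakespan hfeas fun _ => sup_tail_le_slMakespan r' p' _ _
  have waits_le : Finset.univ.sup r + Finset.univ.sup ℓ + Finset.univ.sup r' ≤ 3 * OPT := by lia
  calc
    (SLMakespan r' p' Y₀ s' : K) ≤ ((maxLoad p p' Y₀ + 3 * OPT : ℕ) : K) :=
      Nat.mono_cast (hmakespan.trans (Nat.add_le_add_left waits_le _))
    _ = maxLoad p p' Y₀ + 3 * OPT := by push_cast; rfl
    _ ≤ α * OPT + 3 * OPT := by grw [hload, load_le]
    _ = (α + 3) * OPT := (add_mul ..).symm

/-- 5-approximation guarantee: if the SL instance admits a feasible schedule,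
`OPT` is its minimum makespan, and `Lmin` is the minimum over feasible assignments
of the maximum helper load `max_i ∑_{j : Y j = i} (p i j + p' i j)`, then every
feasible assignment `Y₀` whose maximum helper load is at most `2 * Lmin` can be
completed to a feasible SL schedule of makespan at most `5 * OPT`. -/
theorem sl_five_approximation {J I : Type*}
    [Fintype J] [Fintype I] [Nonempty J] [Nonempty I] [DecidableEq I]
    (E : J → I → Prop) (M : I → ℕ) (d : J → ℕ) (r ℓ r' : J → ℕ)
    (p p' : I → J → ℕ)
    (hfeas : ∃ (Y : J → I) (s s' : J → ℕ), SLFeasible E M d r ℓ p p' Y s s')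
    (OPT Lmin : ℕ)
    (hOPT : OPT = sInf {m : ℕ | ∃ (Y : J → I) (s s' : J → ℕ),
      SLFeasible E M d r ℓ p p' Y s s' ∧ SLMakespan r' p' Y s' = m})
    (hLmin : Lmin = sInf {m : ℕ | ∃ Y : J → I,
      (∀ j : J, E j (Y j)) ∧
      (∀ i : I, ∑ j ∈ Finset.univ.filter (fun j => Y j = i), d j ≤ M i) ∧
      Finset.univ.sup
        (fun i => ∑ j ∈ Finset.univ.filter (fun j => Y j = i), (p i j + p' i j)) = m})
    (Y₀ : J → I)
    (hY₀E : ∀ j : J, E j (Y₀ j))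
    (hY₀M : ∀ i : I, ∑ j ∈ Finset.univ.filter (fun j => Y₀ j = i), d j ≤ M i)
    (hY₀load : Finset.univ.sup
      (fun i => ∑ j ∈ Finset.univ.filter (fun j => Y₀ j = i), (p i j + p' i j)) ≤
        2 * Lmin) :
    ∃ s s' : J → ℕ,
      SLFeasible E M d r ℓ p p' Y₀ s s' ∧ SLMakespan r' p' Y₀ s' ≤ 5 * OPT := by
  subst hOPT hLmin
  simp only [← and_assoc] at hY₀load
  exact sl_five_approximation_general E M d r ℓ r' p p' (α := 2) zero_le_two ⟨hY₀E, hY₀M⟩ hY₀load
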